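/- arXiv:1911.05136 — 5 statements merged into one kernel-verified Lean document; each statement's English description precedes it below -/
import Mathlib

section
/- Let A ∈ ℂ^{m×m}, ε ≥ 0, z₀ ∈ ℂ, θ ∈ ℝ, and r ∈ ℝ. Then ε is a singular value of F_A(r,θ) = A − (z₀ + r·e^{iθ})I if and only if i·r is an eigenvalue of the matrix pencil (C, D_θ), i.e., det(C − i·r·D_θ) = 0. -/
open Complex Matrix MeasureTheory Set Polynomial Topology

noncomputable section

open scoped Classical

/-- `s` is a singular value of the square complex matrix `M`:
`s ≥ 0` and `s²` is an eigenvalue of `M Mᴴ`. -/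
def IsSingularValue {k : ℕ} (M : Matrix (Fin k) (Fin k) ℂ) (s : ℝ) : Prop :=
  0 ≤ s ∧ (M * Mᴴ - ((s : ℂ) ^ 2) • 1).det = 0

/-- The smallest singular value of `M`. -/
def sigmaMin {k : ℕ} (M : Matrix (Fin k) (Fin k) ℂ) : ℝ :=
  sInf {s : ℝ | IsSingularValue M s}

/-- The `ε`-pseudospectrum of `M`. -/
def pspec {k : ℕ} (ε : ℝ) (M : Matrix (Fin k) (Fin k) ℂ) : Set ℂ :=
  {z : ℂ | sigmaMin (M - z • 1) ≤ ε}

/-- The ray emanating from `z₀` in direction `θ`. -/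
def ray (z₀ : ℂ) (θ : ℝ) : Set ℂ :=
  {z : ℂ | ∃ r : ℝ, 0 < r ∧ z = z₀ + (r : ℂ) * Complex.exp ((θ : ℂ) * Complex.I)}

/-- The matrix `C` of the pencil `(C, D_θ)` associated with `A`, `ε`, `z₀`. -/
def pencilC {m : ℕ} (A : Matrix (Fin m) (Fin m) ℂ) (ε : ℝ) (z₀ : ℂ) :
    Matrix (Fin m ⊕ Fin m) (Fin m ⊕ Fin m) ℂ :=
  Matrix.fromBlocks (A - z₀ • 1) ((-(ε : ℂ)) • 1) ((ε : ℂ) • 1) (-(A - z₀ • 1)ᴴ)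

/-- The matrix `D_θ` of the pencil `(C, D_θ)`. -/
def pencilD (m : ℕ) (θ : ℝ) : Matrix (Fin m ⊕ Fin m) (Fin m ⊕ Fin m) ℂ :=
  Matrix.fromBlocks ((-(Complex.I * Complex.exp ((θ : ℂ) * Complex.I))) • 1) 0 0
    ((Complex.I * Complex.exp (-((θ : ℂ) * Complex.I))) • 1)

/-- The spectrum of a matrix pencil `(C, D)`: all `λ` with `det (C - λ D) = 0`. -/
def pencilSpec {k : Type} [Fintype k] [DecidableEq k] (C D : Matrix k k ℂ) : Set ℂ :=
  {lam : ℂ | (C - lam • D).det = 0}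

/-- The function `a_ε(θ) = min {(Arg (-iλ))² : λ ∈ Λ(C, D_θ), Re λ ≤ 0}`. -/
def aFun {m : ℕ} (A : Matrix (Fin m) (Fin m) ℂ) (ε : ℝ) (z₀ : ℂ) (θ : ℝ) : ℝ :=
  sInf {x : ℝ | ∃ lam ∈ pencilSpec (pencilC A ε z₀) (pencilD m θ),
    lam.re ≤ 0 ∧ x = (Complex.arg (-Complex.I * lam)) ^ 2}


lemma det_block_aux {m : ℕ} (F G : Matrix (Fin m) (Fin m) ℂ) (e : ℂ) :
    (F * G - (e ^ 2) • 1).det = 0 ↔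
      (Matrix.fromBlocks F ((-e) • 1) (e • 1) (-G)).det = 0 := by
  by_cases he : e = 0
  · subst he
    simp [Matrix.det_fromBlocks_zero₂₁, Matrix.det_neg]
  · have h1 : Matrix.fromBlocks F ((-e) • 1) (e • 1) (-G) * Matrix.fromBlocks G 1 (e • 1) 0
        = Matrix.fromBlocks (F * G - (e ^ 2) • 1) F 0 (e • 1) := by
      rw [Matrix.fromBlocks_multiply]
      congr 1 <;> simp [smul_smul, sub_eq_add_neg, sq]
    have h2 : Matrix.fromBlocks G (1 : Matrix (Fin m) (Fin m) ℂ) (e • 1) 0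
        * Matrix.fromBlocks 0 (e⁻¹ • 1) 1 (-(e⁻¹ • G)) = 1 := by
      rw [Matrix.fromBlocks_multiply, ← Matrix.fromBlocks_one]
      congr 1 <;> simp [smul_smul, he]
    have h3 := congrArg Matrix.det h2
    rw [Matrix.det_mul, Matrix.det_one] at h3
    have h4 := left_ne_zero_of_mul_eq_one h3
    have h5 := congrArg Matrix.det h1
    rw [Matrix.det_mul, Matrix.det_fromBlocks_zero₂₁] at h5
    have h6 : (e • (1 : Matrix (Fin m) (Fin m) ℂ)).det ≠ 0 := by
      simp [Matrix.det_smul, he]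
    constructor
    · intro h
      rw [h, zero_mul] at h5
      exact (mul_eq_zero.mp h5).resolve_right h4
    · intro h
      rw [h, zero_mul] at h5
      exact (mul_eq_zero.mp h5.symm).resolve_right h6

theorem stmt0 {m : ℕ} (A : Matrix (Fin m) (Fin m) ℂ) (ε : ℝ) (hε : 0 ≤ ε)
    (z₀ : ℂ) (θ r : ℝ) :
    IsSingularValue (A - (z₀ + (r : ℂ) * Complex.exp ((θ : ℂ) * Complex.I)) • 1) ε ↔
      Complex.I * (r : ℂ) ∈ pencilSpec (pencilC A ε z₀) (pencilD m θ) := by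
  have hexp : star (Complex.exp ((θ : ℂ) * Complex.I)) = Complex.exp (-((θ : ℂ) * Complex.I)) := by
    rw [Complex.star_def, ← Complex.exp_conj]
    simp
  have key : pencilC A ε z₀ - (Complex.I * (r : ℂ)) • pencilD m θ
      = Matrix.fromBlocks (A - (z₀ + (r : ℂ) * Complex.exp ((θ : ℂ) * Complex.I)) • 1)
        ((-(ε : ℂ)) • 1) ((ε : ℂ) • 1)
        (-(A - (z₀ + (r : ℂ) * Complex.exp ((θ : ℂ) * Complex.I)) • 1)ᴴ) := by
    have e1 : Complex.I * (r : ℂ) * (-(Complex.I * Complex.exp ((θ : ℂ) * Complex.I)))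
        = (r : ℂ) * Complex.exp ((θ : ℂ) * Complex.I) := by
      linear_combination (-(r : ℂ) * Complex.exp ((θ : ℂ) * Complex.I)) * Complex.I_mul_I
    have e2 : Complex.I * (r : ℂ) * (Complex.I * Complex.exp (-((θ : ℂ) * Complex.I)))
        = -((r : ℂ) * Complex.exp (-((θ : ℂ) * Complex.I))) := by
      linear_combination ((r : ℂ) * Complex.exp (-((θ : ℂ) * Complex.I))) * Complex.I_mul_I
    have e3 : star (r : ℂ) = r := Complex.conj_ofReal r
    rw [pencilC, pencilD, Matrix.fromBlocks_smul, sub_eq_add_neg, Matrix.fromBlocks_neg,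
      Matrix.fromBlocks_add, smul_smul, smul_smul, e1, e2]
    congr 1
    · rw [add_smul]; abel
    · simp
    · simp
    · simp only [Matrix.conjTranspose_sub, Matrix.conjTranspose_add, Matrix.conjTranspose_smul, Matrix.conjTranspose_one,
        star_add, star_mul', hexp, e3, add_smul, neg_smul]
      abel
  rw [IsSingularValue, pencilSpec, Set.mem_ofPred_eq, key, ← det_block_aux]
  exact and_iff_right hε
end
end

section
/- Let A ∈ ℂ^{m×m}, ε ∈ ℝ, z₀ ∈ ℂ, and θ ∈ ℝ. Then 0 is an eigenvalue of the matrix pencil (C, D_θ), i.e., det(C) = 0, if and only if ε² is an eigenvalue of the matrix (A − z₀I)(A − z₀I)*. -/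
open Complex Matrix MeasureTheory Set Polynomial Topology

noncomputable section

open scoped Classical

theorem block_det_aux {m : ℕ} (M N : Matrix (Fin m) (Fin m) ℂ) (e : ℂ) :
    (Matrix.fromBlocks M ((-e) • 1) (e • 1) (-N)).det = 0 ↔
      (M * N - (e ^ 2) • 1).det = 0 := by
  by_cases he : e = 0
  · subst he
    simp [Matrix.det_fromBlocks_zero₂₁, Matrix.det_neg]
  · have h1 : Matrix.fromBlocks M ((-e) • 1) (e • 1) (-N) * Matrix.fromBlocks N 1 (e • 1) 0
        = Matrix.fromBlocks (M * N - (e ^ 2) • 1) M 0 (e • 1) := by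
      rw [Matrix.fromBlocks_multiply]
      congr 1 <;> simp [smul_smul, pow_two, sub_eq_add_neg]
    have h2 : Matrix.fromBlocks N 1 (e • 1) 0 * Matrix.fromBlocks 0 1 1 (-N)
        = Matrix.fromBlocks (1 : Matrix (Fin m) (Fin m) ℂ) 0 0 (e • 1) := by
      rw [Matrix.fromBlocks_multiply]
      congr 1 <;> simp
    have d1 := congrArg Matrix.det h1
    have d2 := congrArg Matrix.det h2
    rw [Matrix.det_mul, Matrix.det_fromBlocks_zero₂₁] at d1 d2
    have hs : (e • (1 : Matrix (Fin m) (Fin m) ℂ)).det ≠ 0 := by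
      simp [Matrix.det_smul, he]
    have hP : (Matrix.fromBlocks N 1 (e • 1) (0 : Matrix (Fin m) (Fin m) ℂ)).det ≠ 0 := by
      intro h
      rw [h, zero_mul, Matrix.det_one, one_mul] at d2
      exact hs d2.symm
    constructor
    · intro h
      rw [h, zero_mul] at d1
      exact (mul_eq_zero.mp d1.symm).resolve_right hs
    · intro h
      rw [h, zero_mul] at d1
      exact (mul_eq_zero.mp d1).resolve_right hP

theorem stmt2 {m : ℕ} (A : Matrix (Fin m) (Fin m) ℂ) (ε : ℝ) (z₀ : ℂ) (θ : ℝ) :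
    (0 : ℂ) ∈ pencilSpec (pencilC A ε z₀) (pencilD m θ) ↔
      ((A - z₀ • 1) * (A - z₀ • 1)ᴴ - ((ε : ℂ) ^ 2) • 1).det = 0 := by
  have h := block_det_aux (A - z₀ • 1) (A - z₀ • 1)ᴴ (ε : ℂ)
  unfold pencilSpec pencilC
  rw [Set.mem_setOf_eq, zero_smul, sub_zero]
  convert h
end
end

section
/- Let A ∈ ℂ^{m×m}, ε ≥ 0, and z₀ ∈ ℂ be such that ε is not a singular value of A − z₀I. Then the function θ ↦ a_ε(θ), viewed as a 2π-periodic function of θ ∈ ℝ, is continuous. -/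
open Complex Matrix MeasureTheory Set Polynomial Topology

noncomputable section

open scoped Classical

attribute [local instance] Matrix.linftyOpNormedRing Matrix.linftyOpNormedAlgebra in
theorem spec_upper {n : Type} [Fintype n] [DecidableEq n] (M : ℝ → Matrix n n ℂ)
    (hM : Continuous M) (θ : ℝ) (S : Set ℂ) (hS : IsOpen S) (h : spectrum ℂ (M θ) ⊆ S) :
    ∀ᶠ t in 𝓝 θ, spectrum ℂ (M t) ⊆ S := by
  have h1 := (upperHemicontinuous_spectrum ℂ (Matrix n n ℂ)).upperHemicontinuousAt (M θ) S
    (hS.mem_nhdsSet.2 h)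
  have h2 := (hM.tendsto θ).eventually h1
  filter_upwards [h2] with t ht
  exact subset_of_mem_nhdsSet ht

theorem spec_lower {n : Type} [Fintype n] [DecidableEq n] (M : ℝ → Matrix n n ℂ)
    (hM : Continuous M) (θ : ℝ) (w : ℂ) (hw : w ∈ spectrum ℂ (M θ)) (δ : ℝ) (hδ : 0 < δ) :
    ∀ᶠ t in 𝓝 θ, ∃ z ∈ spectrum ℂ (M t), ‖w - z‖ < δ := by
  rw [Matrix.mem_spectrum_iff_isRoot_charpoly, IsRoot, Matrix.eval_charpoly] at hw
  have hc : Continuous fun t => ‖(Matrix.scalar n w - M t).det‖ := by fun_prop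
  have h0 : ‖(Matrix.scalar n w - M θ).det‖ < δ ^ Fintype.card n := by
    rw [hw, norm_zero]; positivity
  filter_upwards [hc.continuousAt.eventually_lt continuousAt_const h0] with t ht
  by_contra! hcon
  rw [← Matrix.eval_charpoly, (IsAlgClosed.splits _).eval_eq_prod_roots_of_monic
    (Matrix.charpoly_monic _)] at ht
  have hcard : Multiset.card (M t).charpoly.roots = Fintype.card n := by
    rw [← (IsAlgClosed.splits (M t).charpoly).natDegree_eq_card_roots,
      Matrix.charpoly_natDegree_eq_dim]
  have key : ∀ s : Multiset ℂ, (∀ z ∈ s, δ ≤ ‖w - z‖) →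
      δ ^ Multiset.card s ≤ ‖(s.map (w - ·)).prod‖ := by
    intro s
    induction s using Multiset.induction with
    | empty => simp
    | cons a s ih =>
      intro h
      have h1 := h a (by simp)
      have h2 := ih fun z hz => h z (by simp [hz])
      rw [Multiset.card_cons, Multiset.map_cons, Multiset.prod_cons, norm_mul, pow_succ']
      gcongr
  have := key _ fun z hz => hcon z (by
    rw [Matrix.mem_spectrum_iff_isRoot_charpoly]
    exact Polynomial.isRoot_of_mem_roots hz)
  rw [hcard] at this
  linarith

theorem spec_cont {n : Type} [Fintype n] [DecidableEq n] [Nonempty n] (M : ℝ → Matrix n n ℂ)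
    (hM : Continuous M) (f : ℂ → ℝ) (hf : ∀ z, z ≠ 0 → ContinuousAt f z)
    (h0 : ∀ t, (0 : ℂ) ∉ spectrum ℂ (M t)) :
    Continuous fun t => sInf (f '' spectrum ℂ (M t)) := by
  have hfin : ∀ t, (f '' spectrum ℂ (M t)).Finite := fun t =>
    (Matrix.finite_spectrum (M t)).image f
  have hne : ∀ t, (f '' spectrum ℂ (M t)).Nonempty := fun t =>
    (spectrum.nonempty_of_isAlgClosed_of_finiteDimensional ℂ (M t)).image f
  have hmem := fun t => (hne t).csInf_mem (hfin t)
  rw [continuous_iff_continuousAt]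
  intro θ
  refine tendsto_order.2 ⟨fun a ha => ?_, fun a ha => ?_⟩
  · have hS : IsOpen {z : ℂ | z ≠ 0 ∧ a < f z} := by
      rw [isOpen_iff_mem_nhds]
      rintro z ⟨hz, hz'⟩
      filter_upwards [isOpen_ne.mem_nhds hz, (hf z hz).eventually (lt_mem_nhds hz')] with y h1 h2
      exact ⟨h1, h2⟩
    have hsub : spectrum ℂ (M θ) ⊆ {z : ℂ | z ≠ 0 ∧ a < f z} := by
      intro z hz
      refine ⟨fun h => h0 θ (h ▸ hz), ha.trans_le (csInf_le (hfin θ).bddBelow ⟨z, hz, rfl⟩)⟩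
    filter_upwards [spec_upper M hM θ _ hS hsub] with t ht
    obtain ⟨z, hz, hz'⟩ := hmem t
    rw [← hz']
    exact (ht hz).2
  · obtain ⟨w, hw, hw'⟩ := hmem θ
    have hw0 : w ≠ 0 := fun h => h0 θ (h ▸ hw)
    have ha' : f w < a := by rw [hw']; exact ha
    obtain ⟨δ, hδ, hball⟩ := Metric.eventually_nhds_iff.1 ((hf w hw0).eventually (gt_mem_nhds ha'))
    filter_upwards [spec_lower M hM θ w hw δ hδ] with t ht
    obtain ⟨z, hz, hzd⟩ := ht
    refine (csInf_le (hfin t).bddBelow ⟨z, hz, rfl⟩).trans_lt (hball ?_)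
    rwa [dist_comm, dist_eq_norm]

theorem det_pencilC_ne {m : ℕ} (A : Matrix (Fin m) (Fin m) ℂ) (ε : ℝ) (hε : 0 ≤ ε) (z₀ : ℂ)
    (hsv : ¬ IsSingularValue (A - z₀ • 1) ε) : (pencilC A ε z₀).det ≠ 0 := by
  intro h
  apply hsv
  refine ⟨hε, ?_⟩
  unfold pencilC at h
  set B := A - z₀ • (1 : Matrix (Fin m) (Fin m) ℂ)
  by_cases h0 : ε = 0
  · subst h0
    simp only [Complex.ofReal_zero, zero_smul, Matrix.det_fromBlocks_zero₂₁] at h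
    have hB : B.det = 0 := by
      rcases mul_eq_zero.1 h with h | h
      · exact h
      · rw [Matrix.det_neg, Matrix.det_conjTranspose] at h
        simpa using h
    simp [Matrix.det_mul, hB]
  · have h1 : Matrix.fromBlocks B ((-(ε : ℂ)) • 1) ((ε : ℂ) • 1) (-Bᴴ) *
        Matrix.fromBlocks Bᴴ (-1) ((ε : ℂ) • 1) 0 =
        Matrix.fromBlocks (B * Bᴴ - ((ε : ℂ) ^ 2) • 1) (-B) 0 (-((ε : ℂ) • 1)) := by
      rw [Matrix.fromBlocks_multiply]
      congr 1
      · rw [smul_mul_smul_comm, mul_one, sub_eq_add_neg, ← neg_smul]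
        congr 2
        ring
      · simp
      · simp
      · simp
    have h2 := congrArg Matrix.det h1
    rw [Matrix.det_mul, h, zero_mul, Matrix.det_fromBlocks_zero₂₁] at h2
    rcases mul_eq_zero.1 h2.symm with h3 | h3
    · exact h3
    · rw [← neg_smul, Matrix.det_smul] at h3
      simp [h0] at h3

theorem pencil_symm {m : ℕ} (A : Matrix (Fin m) (Fin m) ℂ) (ε : ℝ) (z₀ : ℂ) (θ : ℝ) (lam : ℂ)
    (h : lam ∈ pencilSpec (pencilC A ε z₀) (pencilD m θ)) :
    -(starRingEnd ℂ lam) ∈ pencilSpec (pencilC A ε z₀) (pencilD m θ) := by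
  unfold pencilSpec at *
  simp only [Set.mem_ofPred_eq] at *
  have key : pencilC A ε z₀ - (-(starRingEnd ℂ lam)) • pencilD m θ =
      Matrix.fromBlocks 0 (-1) 1 0 * (pencilC A ε z₀ - lam • pencilD m θ)ᴴ *
        Matrix.fromBlocks 0 (-1) 1 0 := by
    unfold pencilC pencilD
    have he : (starRingEnd ℂ) (Complex.exp ((θ : ℂ) * Complex.I)) =
        Complex.exp (-((θ : ℂ) * Complex.I)) := by
      rw [← Complex.exp_conj]; simp
    have he' : (starRingEnd ℂ) (Complex.exp (-((θ : ℂ) * Complex.I))) =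
        Complex.exp ((θ : ℂ) * Complex.I) := by
      rw [← Complex.exp_conj]; simp
    simp only [Matrix.fromBlocks_smul, sub_eq_add_neg, Matrix.fromBlocks_neg, Matrix.fromBlocks_add, Matrix.fromBlocks_conjTranspose,
      Matrix.fromBlocks_multiply]
    congr 1 <;> ext i j <;>
      simp [he, he', Matrix.one_apply, Matrix.conjTranspose_apply] <;> ring
  rw [key, Matrix.det_mul, Matrix.det_mul, Matrix.det_conjTranspose, h]
  simp

/-- The inverse of `D_θ`. -/
def pencilDinv (m : ℕ) (θ : ℝ) : Matrix (Fin m ⊕ Fin m) (Fin m ⊕ Fin m) ℂ :=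
  Matrix.fromBlocks ((Complex.I * Complex.exp (-((θ : ℂ) * Complex.I))) • 1) 0 0
    ((-(Complex.I * Complex.exp ((θ : ℂ) * Complex.I))) • 1)

theorem pencilD_mul_inv (m : ℕ) (θ : ℝ) : pencilD m θ * pencilDinv m θ = 1 := by
  have h1 : Complex.exp ((θ : ℂ) * Complex.I) * Complex.exp (-((θ : ℂ) * Complex.I)) = 1 := by
    rw [← Complex.exp_add]; simp
  unfold pencilD pencilDinv
  rw [Matrix.fromBlocks_multiply, ← Matrix.fromBlocks_one]
  congr 1
  · simp only [smul_mul_smul_comm, mul_one, mul_zero, add_zero]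
    rw [show -(Complex.I * Complex.exp ((θ : ℂ) * Complex.I)) *
      (Complex.I * Complex.exp (-((θ : ℂ) * Complex.I))) = 1 by
        linear_combination (-Complex.I ^ 2) * h1 - Complex.I_sq, one_smul]
  · simp
  · simp
  · simp only [smul_mul_smul_comm, mul_one, mul_zero, zero_add]
    rw [show (Complex.I * Complex.exp (-((θ : ℂ) * Complex.I))) *
      -(Complex.I * Complex.exp ((θ : ℂ) * Complex.I)) = 1 by
        linear_combination (-Complex.I ^ 2) * h1 - Complex.I_sq, one_smul]

theorem pencilSpec_eq {m : ℕ} (C : Matrix (Fin m ⊕ Fin m) (Fin m ⊕ Fin m) ℂ) (θ : ℝ) :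
    pencilSpec C (pencilD m θ) = spectrum ℂ (C * pencilDinv m θ) := by
  ext lam
  have h1 := pencilD_mul_inv m θ
  have h2 : C * pencilDinv m θ - Matrix.scalar _ lam =
      (C - lam • pencilD m θ) * pencilDinv m θ := by
    rw [sub_mul, Matrix.smul_mul, h1, Matrix.smul_one_eq_diagonal]; rfl
  have h3 : (pencilDinv m θ).det ≠ 0 := by
    intro h
    have := congrArg Matrix.det h1
    rw [Matrix.det_mul, h] at this
    simp at this
  rw [Matrix.mem_spectrum_iff_isRoot_charpoly, IsRoot, Matrix.eval_charpoly, ← neg_sub,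
    Matrix.det_neg, h2, Matrix.det_mul]
  simp [pencilSpec, h3]

theorem aFun_eq {m : ℕ} (A : Matrix (Fin m) (Fin m) ℂ) (ε : ℝ) (z₀ : ℂ) (θ : ℝ) :
    aFun A ε z₀ θ = sInf ((fun lam : ℂ => (Complex.arg (-Complex.I * lam)) ^ 2) ''
      spectrum ℂ (pencilC A ε z₀ * pencilDinv m θ)) := by
  rw [← pencilSpec_eq]
  unfold aFun
  congr 1
  ext x
  constructor
  · rintro ⟨lam, h, -, rfl⟩
    exact ⟨lam, h, rfl⟩
  · rintro ⟨lam, h, rfl⟩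
    by_cases hr : lam.re ≤ 0
    · exact ⟨lam, h, hr, rfl⟩
    · refine ⟨_, pencil_symm A ε z₀ θ lam h, ?_, ?_⟩
      · simp; linarith
      · have : -Complex.I * -(starRingEnd ℂ lam) = starRingEnd ℂ (-Complex.I * lam) := by simp
        rw [this, Complex.arg_conj]
        split_ifs with hh
        · rw [← hh]
        · simp

theorem argsq_cont (z : ℂ) (hz : z ≠ 0) :
    ContinuousAt (fun lam : ℂ => (Complex.arg (-Complex.I * lam)) ^ 2) z := by
  have h1 : ContinuousAt (fun lam : ℂ => (InnerProductGeometry.angle (1 : ℂ) (-Complex.I * lam)) ^ 2) z := by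
    have hh : ContinuousAt (fun y : ℂ × ℂ => InnerProductGeometry.angle y.1 y.2)
      ((fun lam : ℂ => ((1 : ℂ), -Complex.I * lam)) z) :=
      InnerProductGeometry.continuousAt_angle (by simp) (by simp [hz])
    have hg : ContinuousAt (fun lam : ℂ => ((1 : ℂ), -Complex.I * lam)) z := by fun_prop
    exact (ContinuousAt.comp (f := fun lam : ℂ => ((1 : ℂ), -Complex.I * lam)) hh hg).pow 2
  refine h1.congr ?_
  filter_upwards [isOpen_ne.mem_nhds hz] with y hy
  have hy' : y ≠ 0 := hy
  rw [Complex.angle_one_left (by simp [hy']), sq_abs]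

theorem pencilDinv_cont (m : ℕ) : Continuous (pencilDinv m) := by
  unfold pencilDinv
  apply Continuous.matrix_fromBlocks <;> fun_prop

theorem stmt5 {m : ℕ} (A : Matrix (Fin m) (Fin m) ℂ) (ε : ℝ) (hε : 0 ≤ ε) (z₀ : ℂ)
    (hsv : ¬ IsSingularValue (A - z₀ • 1) ε) :
    Function.Periodic (aFun A ε z₀) (2 * Real.pi) ∧ Continuous (aFun A ε z₀) := by
  constructor
  · intro θ
    have : pencilD m (θ + 2 * Real.pi) = pencilD m θ := by
      unfold pencilD
      have h1 : Complex.exp (((θ + 2 * Real.pi : ℝ) : ℂ) * Complex.I) =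
          Complex.exp ((θ : ℂ) * Complex.I) := by
        push_cast
        rw [add_mul, Complex.exp_periodic]
      rw [Complex.exp_neg, Complex.exp_neg, h1]
    unfold aFun
    rw [this]
  · rcases Nat.eq_zero_or_pos m with rfl | hm
    · have : aFun A ε z₀ = fun _ => 0 := by
        funext θ
        simp [aFun, pencilSpec]
      rw [this]
      exact continuous_const
    · have : Nonempty (Fin m ⊕ Fin m) := ⟨Sum.inl ⟨0, hm⟩⟩
      have := spec_cont (fun θ => pencilC A ε z₀ * pencilDinv m θ)
        (continuous_const.mul (pencilDinv_cont m)) _ argsq_cont (fun t h => by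
          rw [← pencilSpec_eq] at h
          apply det_pencilC_ne A ε hε z₀ hsv
          simpa [pencilSpec] using h)
      have e : aFun A ε z₀ = _ := funext (aFun_eq A ε z₀)
      rw [e]
      exact this
end
end

section
/- Let A ∈ ℂ^{m×m}, ε ≥ 0, and z₀ ∈ ℂ be such that ε is not a singular value of A − z₀I. If ε > σ_min(A − z₀I), then 𝒜(ε) = (−π, π], and hence the Lebesgue measure of 𝒜(ε) equals 2π. -/
open Complex Matrix MeasureTheory Set Polynomial Topology

noncomputable section

open scoped Classical

open scoped ComplexOrder in
lemma aux_herm_nonneg {m : ℕ} {H : Matrix (Fin m) (Fin m) ℂ} (hH : H.IsHermitian)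
    (h : ∀ v : Fin m → ℂ, ‖v‖ = 1 → 0 ≤ (star v ⬝ᵥ H *ᵥ v).re) : H.PosSemidef := by
  refine PosSemidef.of_dotProduct_mulVec_nonneg hH fun x => ?_
  have him : (star x ⬝ᵥ H *ᵥ x).im = 0 := hH.im_star_dotProduct_mulVec_self x
  have hre : 0 ≤ (star x ⬝ᵥ H *ᵥ x).re := by
    by_cases hx : x = 0
    · simp [hx]
    have hn : 0 < ‖x‖ := norm_pos_iff.mpr hx
    have h1 := h (((‖x‖⁻¹ : ℝ) : ℂ) • x) (by
      rw [norm_smul, Complex.norm_real, norm_inv, norm_norm, inv_mul_cancel₀ hn.ne'])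
    rw [star_smul, mulVec_smul, dotProduct_smul, smul_dotProduct, smul_smul, smul_eq_mul] at h1
    have h2 : (((‖x‖⁻¹ : ℝ) : ℂ) * star ((‖x‖⁻¹ : ℝ) : ℂ)) = ((‖x‖⁻¹ ^ 2 : ℝ) : ℂ) := by
      simp [sq]
    rw [h2, Complex.re_ofReal_mul] at h1
    have : 0 < ‖x‖⁻¹ ^ 2 := by positivity
    exact nonneg_of_mul_nonneg_right h1 this
  rw [Complex.le_def]
  exact ⟨hre, him.symm⟩

open scoped ComplexOrder in
lemma aux_exists {m : ℕ} (H0 H1 : Matrix (Fin m) (Fin m) ℂ) (h0 : H0.IsHermitian)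
    (h1 : H1.IsHermitian) (v : Fin m → ℂ) (hv : v ≠ 0) (hneg : (star v ⬝ᵥ H0 *ᵥ v).re < 0) :
    ∃ r : ℝ, 0 ≤ r ∧ ∃ u : Fin m → ℂ, u ≠ 0 ∧
      (H0 + (r : ℂ) • H1 + ((r : ℂ) ^ 2) • 1) *ᵥ u = 0 := by
  let K : Set (Fin m → ℂ) := Metric.sphere 0 1
  have hK : IsCompact K := isCompact_sphere _ _
  let a : (Fin m → ℂ) → ℝ := fun v => (star v ⬝ᵥ H0 *ᵥ v).re
  let b : (Fin m → ℂ) → ℝ := fun v => (star v ⬝ᵥ H1 *ᵥ v).re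
  let c : (Fin m → ℂ) → ℝ := fun v => (star v ⬝ᵥ v).re
  have ha : Continuous a := by
    simp only [a]; fun_prop
  have hb : Continuous b := by
    simp only [b]; fun_prop
  have hc : Continuous c := by
    simp only [c]; fun_prop
  have hq : ∀ (r : ℝ) v, (star v ⬝ᵥ (H0 + (r : ℂ) • H1 + ((r : ℂ) ^ 2) • 1) *ᵥ v).re
      = a v + r * b v + r ^ 2 * c v := by
    intro r v
    simp only [add_mulVec, smul_mulVec, one_mulVec, dotProduct_add, dotProduct_smul, smul_eq_mul,
      Complex.add_re, ← Complex.ofReal_pow, Complex.re_ofReal_mul, a, b, c]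
  have hc1 : ∀ v ∈ K, 1 ≤ c v := by
    intro v hv
    have hv1 : ‖v‖ = 1 := by simpa [K] using hv
    have hcs : c v = ∑ i, ‖v i‖ ^ 2 := by
      simp only [c, dotProduct, Complex.re_sum]
      refine Finset.sum_congr rfl fun i _ => ?_
      rw [← Complex.normSq_eq_norm_sq, Pi.star_apply, Complex.star_def, ← Complex.normSq_eq_conj_mul_self]
      simp
    by_contra hlt
    push Not at hlt
    have : ‖v‖ < 1 := by
      rw [pi_norm_lt_iff one_pos]
      intro i
      have h3 : ‖v i‖ ^ 2 ≤ ∑ i, ‖v i‖ ^ 2 :=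
        Finset.single_le_sum (f := fun i => ‖v i‖ ^ 2) (fun _ _ => by positivity) (Finset.mem_univ i)
      nlinarith [norm_nonneg (v i)]
    linarith
  have hn : 0 < ‖v‖ := norm_pos_iff.mpr hv
  let w : Fin m → ℂ := ((‖v‖⁻¹ : ℝ) : ℂ) • v
  have hwK : w ∈ K := by
    simp only [K, mem_sphere_zero_iff_norm, w]
    rw [norm_smul, Complex.norm_real, norm_inv, norm_norm, inv_mul_cancel₀ hn.ne']
  have haw : a w < 0 := by
    simp only [a, w]
    rw [star_smul, mulVec_smul, dotProduct_smul, smul_dotProduct, smul_smul, smul_eq_mul]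
    have h2 : (((‖v‖⁻¹ : ℝ) : ℂ) * star ((‖v‖⁻¹ : ℝ) : ℂ)) = ((‖v‖⁻¹ ^ 2 : ℝ) : ℂ) := by
      simp [sq]
    rw [h2, Complex.re_ofReal_mul]
    have : 0 < ‖v‖⁻¹ ^ 2 := by positivity
    exact mul_neg_of_pos_of_neg this hneg
  have hKne : K.Nonempty := ⟨w, hwK⟩
  let q : ℝ → (Fin m → ℂ) → ℝ := fun r v => a v + r * b v + r ^ 2 * c v
  have hqc : Continuous ↿q := by
    change Continuous fun p : ℝ × (Fin m → ℂ) => a p.2 + p.1 * b p.2 + p.1 ^ 2 * c p.2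
    fun_prop
  have hqcr : ∀ r, Continuous (q r) := fun r => by
    simp only [q]; fun_prop
  have hg : Continuous fun r => sInf (q r '' K) := hK.continuous_sInf hqc
  obtain ⟨Ka, hKa⟩ := (hK.image ha).bddBelow
  obtain ⟨Kb, hKb⟩ := (hK.image hb).bddBelow
  let M : ℝ := |Ka| + |Kb|
  have hM : 0 ≤ M := by positivity
  have hMa : ∀ v ∈ K, -M ≤ a v := fun v hv => by
    have := hKa (mem_image_of_mem a hv)
    have := neg_abs_le Ka
    have := abs_nonneg Kb
    simp only [M]; linarith
  have hMb : ∀ v ∈ K, -M ≤ b v := fun v hv => by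
    have := hKb (mem_image_of_mem b hv)
    have := neg_abs_le Kb
    have := abs_nonneg Ka
    simp only [M]; linarith
  have hg0 : sInf (q 0 '' K) ≤ 0 := by
    refine (csInf_le (hK.image (hqcr 0)).bddBelow (mem_image_of_mem _ hwK)).trans ?_
    simp only [q]; linarith
  have hgM : 0 ≤ sInf (q (M + 1) '' K) := by
    refine le_csInf (hKne.image _) ?_
    rintro _ ⟨u, hu, rfl⟩
    have e1 := hMa u hu
    have e2 := hMb u hu
    have e3 := hc1 u hu
    simp only [q]
    have e4 : (M + 1) * (-M) ≤ (M + 1) * b u := mul_le_mul_of_nonneg_left e2 (by linarith)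
    have e5 : (M + 1) ^ 2 * 1 ≤ (M + 1) ^ 2 * c u := mul_le_mul_of_nonneg_left e3 (by positivity)
    nlinarith
  obtain ⟨r, hr, hr0⟩ := intermediate_value_Icc (by linarith : (0 : ℝ) ≤ M + 1) hg.continuousOn
    (show (0 : ℝ) ∈ Icc _ _ from ⟨hg0, hgM⟩)
  simp only at hr0
  obtain ⟨u, hu, hu1, hu2⟩ := hK.exists_sInf_image_eq_and_le hKne (hqcr r).continuousOn
  rw [hr0] at hu1
  have hH : (H0 + (r : ℂ) • H1 + ((r : ℂ) ^ 2) • 1).IsHermitian := by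
    refine (h0.add ?_).add ?_
    · unfold Matrix.IsHermitian; rw [conjTranspose_smul, h1.eq]; simp
    · unfold Matrix.IsHermitian; rw [conjTranspose_smul, conjTranspose_one]; simp
  have hP := aux_herm_nonneg hH (fun v hv => by
    rw [hq]
    have := hu2 v (by simpa [K] using hv)
    rw [← hu1] at this
    exact this)
  refine ⟨r, hr.1, u, ?_, ?_⟩
  · rintro rfl
    simp [K] at hu
  · rw [← hP.dotProduct_mulVec_zero_iff]
    apply Complex.ext
    · rw [hq]; exact hu1.symm
    · exact hH.im_star_dotProduct_mulVec_self u

open scoped ComplexOrder in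
lemma aux_sv_nonempty {m : ℕ} (hm : 0 < m) (B : Matrix (Fin m) (Fin m) ℂ) :
    ∃ s, IsSingularValue B s := by
  have hP := posSemidef_self_mul_conjTranspose B
  let i : Fin m := ⟨0, hm⟩
  refine ⟨Real.sqrt (hP.1.eigenvalues i), Real.sqrt_nonneg _, ?_⟩
  rw [← Complex.ofReal_pow, Real.sq_sqrt (hP.eigenvalues_nonneg i)]
  rw [← exists_mulVec_eq_zero_iff]
  refine ⟨hP.1.eigenvectorBasis i, ?_, ?_⟩
  · intro h
    exact hP.1.eigenvectorBasis.orthonormal.ne_zero i (by ext j; exact congrFun h j)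
  · rw [sub_mulVec, hP.1.mulVec_eigenvectorBasis i, smul_mulVec, one_mulVec, sub_eq_zero]
    rfl

open scoped ComplexOrder in
lemma aux_aFun {m : ℕ} (A : Matrix (Fin m) (Fin m) ℂ) (ε : ℝ) (z₀ : ℂ)
    (hgt : sigmaMin (A - z₀ • 1) < ε) (θ : ℝ) : aFun A ε z₀ θ = 0 := by
  have hεpos : 0 < ε := lt_of_le_of_lt (Real.sInf_nonneg fun s hs => hs.1) hgt
  rcases Nat.eq_zero_or_pos m with rfl | hm
  · have : {x : ℝ | ∃ lam ∈ pencilSpec (pencilC A ε z₀) (pencilD 0 θ),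
        lam.re ≤ 0 ∧ x = (Complex.arg (-Complex.I * lam)) ^ 2} = ∅ := by
      ext x
      simp [pencilSpec]
    rw [aFun, this, Real.sInf_empty]
  have hnn : ∀ x ∈ {x : ℝ | ∃ lam ∈ pencilSpec (pencilC A ε z₀) (pencilD m θ),
        lam.re ≤ 0 ∧ x = (Complex.arg (-Complex.I * lam)) ^ 2}, 0 ≤ x := by
    rintro x ⟨lam, _, _, rfl⟩
    positivity
  refine le_antisymm (csInf_le ⟨0, hnn⟩ ?_) (Real.sInf_nonneg hnn)
  set B := A - z₀ • 1 with hB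
  clear_value B
  obtain ⟨s, ⟨hs0, hs⟩, hsε⟩ := exists_lt_of_csInf_lt (aux_sv_nonempty hm B) hgt
  rw [← exists_mulVec_eq_zero_iff] at hs
  obtain ⟨v, hv, hv0⟩ := hs
  set w : ℂ := Complex.exp ((θ : ℂ) * Complex.I) with hw
  have hwc : star w = Complex.exp (-((θ : ℂ) * Complex.I)) := by
    rw [hw, Complex.star_def, ← Complex.exp_conj]; simp
  have hww : w * star w = 1 := by
    rw [hwc, hw, ← Complex.exp_add]; simp
  have hvv : 0 < (star v ⬝ᵥ v).re := by
    have := dotProduct_star_self_pos_iff.mpr hv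
    exact (Complex.lt_def.mp this).1
  obtain ⟨r, hr, u, hu, hu0⟩ := aux_exists (B * Bᴴ - ((ε : ℂ) ^ 2) • 1)
    (-(star w • B + w • Bᴴ)) (by
      unfold Matrix.IsHermitian
      simp [conjTranspose_sub, conjTranspose_mul, conjTranspose_smul]) (by
      unfold Matrix.IsHermitian
      simp only [conjTranspose_neg, conjTranspose_add, conjTranspose_smul, star_star,
        conjTranspose_conjTranspose]
      rw [add_comm]) v hv (by
      have e : (B * Bᴴ - ((ε : ℂ) ^ 2) • 1) *ᵥ v = ((s ^ 2 - ε ^ 2 : ℝ) : ℂ) • v := by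
        rw [sub_mulVec, smul_mulVec, one_mulVec, sub_eq_zero] at hv0
        rw [sub_mulVec, smul_mulVec, one_mulVec, hv0, ← sub_smul]
        push_cast
        rfl
      rw [e, dotProduct_smul, smul_eq_mul, Complex.re_ofReal_mul]
      exact mul_neg_of_neg_of_pos (by nlinarith) hvv)
  set N := B - ((r : ℂ) * w) • (1 : Matrix (Fin m) (Fin m) ℂ) with hN
  have hNN : B * Bᴴ - ((ε : ℂ) ^ 2) • 1 + (r : ℂ) • (-(star w • B + w • Bᴴ)) + ((r : ℂ) ^ 2) • 1
      = N * Nᴴ - ((ε : ℂ) ^ 2) • 1 := by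
    have h5 : ((r : ℂ) ^ 2) = (r * w) * (r * star w) := by
      linear_combination (-(r : ℂ) ^ 2) * hww
    rw [h5, hN]
    have : star ((r : ℂ) * w) = r * star w := by simp
    rw [conjTranspose_sub, conjTranspose_smul, conjTranspose_one, this]
    simp only [sub_mul, mul_sub, Matrix.smul_mul, Matrix.mul_smul, Matrix.one_mul, Matrix.mul_one]
    module
  rw [hNN, sub_mulVec, smul_mulVec, one_mulVec, sub_eq_zero, ← mulVec_mulVec] at hu0
  refine ⟨Complex.I * r, ?_, by simp, ?_⟩
  swap
  · have : -Complex.I * (Complex.I * r) = ((r : ℝ) : ℂ) := by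
      linear_combination (-(r : ℂ)) * Complex.I_mul_I
    rw [this, Complex.arg_ofReal_of_nonneg hr]; simp
  have hmat : pencilC A ε z₀ - (Complex.I * r) • pencilD m θ =
      fromBlocks N ((-(ε : ℂ)) • 1) ((ε : ℂ) • 1) (-Nᴴ) := by
    unfold pencilC pencilD
    rw [fromBlocks_smul, sub_eq_add_neg, fromBlocks_neg, fromBlocks_add, ← hB, ← hw, ← hwc]
    have : star ((r : ℂ) * w) = r * star w := by simp
    congr 1
    · rw [hN, smul_smul, ← neg_smul, sub_eq_add_neg, ← neg_smul]
      congr 2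
      linear_combination ((r : ℂ) * w) * Complex.I_mul_I
    · simp
    · simp
    · rw [hN, smul_smul, ← neg_smul, conjTranspose_sub, conjTranspose_smul, conjTranspose_one, this,
        neg_sub, sub_eq_add_neg, add_comm]
      congr 2
      linear_combination (-(r : ℂ) * star w) * Complex.I_mul_I
  change (pencilC A ε z₀ - (Complex.I * r) • pencilD m θ).det = 0
  rw [hmat, ← exists_mulVec_eq_zero_iff]
  have hεc : (ε : ℂ) ≠ 0 := by exact_mod_cast hεpos.ne'
  refine ⟨Sum.elim (Nᴴ *ᵥ u) ((ε : ℂ) • u), ?_, ?_⟩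
  · intro h
    apply hu
    have h6 : (ε : ℂ) • u = 0 := by
      ext j
      exact congrFun h (Sum.inr j)
    exact (smul_eq_zero.mp h6).resolve_left hεc
  · rw [fromBlocks_mulVec]
    simp only [Sum.elim_comp_inl, Sum.elim_comp_inr, hu0, smul_mulVec, one_mulVec, neg_mulVec,
      mulVec_smul, smul_smul]
    ext j
    rcases j with j | j
    · simp only [Sum.elim_inl, Pi.add_apply, Pi.smul_apply, smul_eq_mul, Pi.zero_apply]
      ring
    · simp

theorem stmt8 {m : ℕ} (A : Matrix (Fin m) (Fin m) ℂ) (ε : ℝ) (hε : 0 ≤ ε) (z₀ : ℂ)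
    (hsv : ¬ IsSingularValue (A - z₀ • 1) ε)
    (hgt : sigmaMin (A - z₀ • 1) < ε) :
    {θ : ℝ | θ ∈ Set.Ioc (-Real.pi) Real.pi ∧ aFun A ε z₀ θ = 0} =
        Set.Ioc (-Real.pi) Real.pi ∧
    volume {θ : ℝ | θ ∈ Set.Ioc (-Real.pi) Real.pi ∧ aFun A ε z₀ θ = 0} =
      ENNReal.ofReal (2 * Real.pi) := by
  have h : {θ : ℝ | θ ∈ Set.Ioc (-Real.pi) Real.pi ∧ aFun A ε z₀ θ = 0} =
        Set.Ioc (-Real.pi) Real.pi := by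
    ext θ
    simp [aux_aFun A ε z₀ hgt θ]
  refine ⟨h, ?_⟩
  rw [h, Real.volume_Ioc]
  congr 1
  ring
end
end

section
/- Let 𝒜, ℬ ⊂ ℝ be sets such that 𝒜 has exactly m connected components and ℬ has exactly n connected components, where m and n are positive integers. Then 𝒜 ∩ ℬ has at most m + n − 1 connected components. -/
open Complex Matrix MeasureTheory Set Polynomial Topology

noncomputable section

open scoped Classical

/-- The set of connected components of a set `S ⊆ ℝ` (with the subspace topology). -/
def compSet (S : Set ℝ) : Set (Set ℝ) :=
  {T : Set ℝ | ∃ x ∈ S, T = connectedComponentIn S x}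

lemma comp_eq_iff (S : Set ℝ) {x y : ℝ} (hx : x ∈ S) (hy : y ∈ S) (hxy : x ≤ y) :
    connectedComponentIn S x = connectedComponentIn S y ↔ Set.Icc x y ⊆ S := by
  constructor
  · intro h
    have hx' : x ∈ connectedComponentIn S x := mem_connectedComponentIn hx
    have hy' : y ∈ connectedComponentIn S x := h ▸ mem_connectedComponentIn hy
    have hc : (connectedComponentIn S x).OrdConnected :=
      isPreconnected_connectedComponentIn.ordConnected
    exact (hc.out hx' hy').trans (connectedComponentIn_subset S x)
  · intro h
    apply connectedComponentIn_eq
    exact isPreconnected_Icc.subset_connectedComponentIn (Set.left_mem_Icc.2 hxy) h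
      (Set.right_mem_Icc.2 hxy)

lemma comp_new (S : Set ℝ) (P : Finset ℝ) (hP : (P : Set ℝ) ⊆ S) {x y : ℝ} (hx : x ∈ S)
    (hyx : y ≤ x) (hmax : ∀ p ∈ P, p ≤ y) (h : ¬ Set.Icc y x ⊆ S) :
    connectedComponentIn S x ∉ P.image (connectedComponentIn S) := by
  intro hmem
  obtain ⟨p, hp, he⟩ := Finset.mem_image.1 hmem
  apply h
  have h1 := (comp_eq_iff S (hP hp) hx ((hmax p hp).trans hyx)).1 he
  exact (Set.Icc_subset_Icc_left (hmax p hp)).trans h1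

lemma comp_count (A B : Set ℝ) (P : Finset ℝ) : (P : Set ℝ) ⊆ A ∩ B → P.Nonempty →
    (P.image (connectedComponentIn (A ∩ B))).card + 1 ≤
      (P.image (connectedComponentIn A)).card + (P.image (connectedComponentIn B)).card := by
  induction P using Finset.induction_on_max with
  | empty => intro _ h; simp at h
  | insert x P hlt ih =>
    intro hsub _
    have hP : (P : Set ℝ) ⊆ A ∩ B := fun p hp => hsub (by simp_all)
    have hx : x ∈ A ∩ B := hsub (by simp)
    rcases P.eq_empty_or_nonempty with rfl | hne
    · simp
    have ih := ih hP hne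
    have hyP := P.max'_mem hne
    set y := P.max' hne with hy
    have hmax : ∀ p ∈ P, p ≤ y := fun p hp => P.le_max' p hp
    have hyx : y ≤ x := (hlt y hyP).le
    have mA : (P.image (connectedComponentIn A)).card ≤
        ((insert x P).image (connectedComponentIn A)).card :=
      Finset.card_le_card (Finset.image_subset_image (Finset.subset_insert _ _))
    have mB : (P.image (connectedComponentIn B)).card ≤
        ((insert x P).image (connectedComponentIn B)).card :=
      Finset.card_le_card (Finset.image_subset_image (Finset.subset_insert _ _))
    by_cases hin : Set.Icc y x ⊆ A ∩ B
    · have he := (comp_eq_iff (A ∩ B) (hP hyP) hx hyx).2 hin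
      have : (insert x P).image (connectedComponentIn (A ∩ B)) =
          P.image (connectedComponentIn (A ∩ B)) := by
        rw [Finset.image_insert]
        exact Finset.insert_eq_of_mem (Finset.mem_image.2 ⟨y, hyP, he⟩)
      rw [this]; omega
    · have hle : ((insert x P).image (connectedComponentIn (A ∩ B))).card ≤
          (P.image (connectedComponentIn (A ∩ B))).card + 1 := by
        rw [Finset.image_insert]; exact Finset.card_insert_le _ _
      rw [Set.subset_inter_iff, not_and_or] at hin
      rcases hin with h | h
      · have hn := comp_new A P (fun p hp => (hP hp).1) hx.1 hyx hmax h
        have : ((insert x P).image (connectedComponentIn A)).card =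
            (P.image (connectedComponentIn A)).card + 1 := by
          rw [Finset.image_insert]; exact Finset.card_insert_of_notMem hn
        omega
      · have hn := comp_new B P (fun p hp => (hP hp).2) hx.2 hyx hmax h
        have : ((insert x P).image (connectedComponentIn B)).card =
            (P.image (connectedComponentIn B)).card + 1 := by
          rw [Finset.image_insert]; exact Finset.card_insert_of_notMem hn
        omega

lemma comp_image_card (S : Set ℝ) (hf : (compSet S).Finite) (P : Finset ℝ)
    (hP : (P : Set ℝ) ⊆ S) :
    (P.image (connectedComponentIn S)).card ≤ (compSet S).ncard := by
  rw [← Set.ncard_coe_finset]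
  apply Set.ncard_le_ncard _ hf
  intro T hT
  obtain ⟨p, hp, rfl⟩ := Finset.mem_image.1 (Finset.mem_coe.1 hT)
  exact ⟨p, hP hp, rfl⟩

lemma comp_finset (A B : Set ℝ) (hA : (compSet A).Finite) (hB : (compSet B).Finite)
    (t : Finset (Set ℝ)) (ht : (t : Set (Set ℝ)) ⊆ compSet (A ∩ B)) (hne : t.Nonempty) :
    t.card + 1 ≤ (compSet A).ncard + (compSet B).ncard := by
  have hsub : (t : Set (Set ℝ)) ⊆ connectedComponentIn (A ∩ B) '' (A ∩ B) := by
    intro T hT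
    obtain ⟨x, hx, rfl⟩ := ht hT
    exact ⟨x, hx, rfl⟩
  obtain ⟨P, hP, rfl⟩ := Finset.subset_set_image_iff.1 hsub
  have h1 := comp_count A B P hP (Finset.image_nonempty.1 hne)
  have h2 := comp_image_card A hA P (fun p hp => (hP hp).1)
  have h3 := comp_image_card B hB P (fun p hp => (hP hp).2)
  convert h1.trans (add_le_add h2 h3)

theorem stmt10 (𝒜 ℬ : Set ℝ) (m n : ℕ) (hm : 0 < m) (hn : 0 < n)
    (hAfin : (compSet 𝒜).Finite) (hAcard : (compSet 𝒜).ncard = m)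
    (hBfin : (compSet ℬ).Finite) (hBcard : (compSet ℬ).ncard = n) :
    (compSet (𝒜 ∩ ℬ)).Finite ∧ (compSet (𝒜 ∩ ℬ)).ncard ≤ m + n - 1 := by
  subst hAcard hBcard
  have key := comp_finset 𝒜 ℬ hAfin hBfin
  have hfin : (compSet (𝒜 ∩ ℬ)).Finite := by
    by_contra hinf
    obtain ⟨t, ht, hc⟩ := Set.Infinite.exists_subset_card_eq hinf
      ((compSet 𝒜).ncard + (compSet ℬ).ncard)
    have := key t ht (Finset.card_pos.1 (by omega))
    omega
  refine ⟨hfin, ?_⟩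
  rcases (compSet (𝒜 ∩ ℬ)).eq_empty_or_nonempty with he | hne
  · simp [he]
  have := key hfin.toFinset (by simp) (by simpa using hne)
  rw [← Set.ncard_eq_toFinset_card _ hfin] at this
  omega
end
end
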